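/- arXiv:2104.15120 — 3 statements merged into one kernel-verified Lean document; each statement's English description precedes it below -/
import Mathlib

section
/- Let m, n ≥ 1 and set N = m + n. Suppose B is a map from the set of planar empty rectangles in F' to {1, −1} such that B(r) = 1 for every planar thin rectangle r in F', and such that B(r1)·B(r2) = B(r3)·B(r4) whenever (r1, r2) and (r3, r4) form a square all four of whose rectangles are planar, empty, and in F'. Then B(r) = 1 for every planar empty rectangle r in F'. -/
/-!
Induct on the number of columns of a planar empty rectangle `r(σ, i, j)`. If it is not thin, then
one of the pairs `(i, i + 1)` and `(j - 1, j)` can be swapped without leaving the set of generators,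
since at most one pair of neighbouring columns is forbidden. Let `k` be the inner column of that
pair. Emptiness puts the marking in column `k` above or below the rectangle; either way the
rectangle and a thin one tile an L-shaped region, whose other tiling consists of a thin rectangle
and a rectangle narrower by one column. The resulting square shows that `B` agrees on the two
rectangles that need not be thin.
-/

/-- A rectangle `r(σ, i, j)` on the toroidal grid of size `N`: a flow from the
generator `σ` to the generator `σ^{ij}`. -/
structure GridRect (N : ℕ) where
  perm : Equiv.Perm (Fin N)
  i : Fin N
  j : Fin N
  hij : i ≠ j

namespace GridRect

variable {N : ℕ}

/-- The ending generator `σ^{ij}` of the rectangle `r(σ, i, j)`. -/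
def endPerm (r : GridRect N) : Equiv.Perm (Fin N) :=
  (Equiv.swap r.i r.j).trans r.perm

/-- The domain of the rectangle `r(σ,i,j)`: the indicator function of `C × R` where `C`
is the cyclic interval of columns from `i` to `j` and `R` is the cyclic interval of rows
from `σ(i)` to `σ(j)`. -/
def dom (r : GridRect N) (p : Fin N × Fin N) : ℕ :=
  if (p.1 - r.i < r.j - r.i) ∧ (p.2 - r.perm r.i < r.perm r.j - r.perm r.i) then 1 else 0

/-- A rectangle is planar if `i < j` and `σ(i) < σ(j)`. -/
def Planar (r : GridRect N) : Prop := r.i < r.j ∧ r.perm r.i < r.perm r.j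

/-- A planar rectangle is empty if no column strictly between `i` and `j` is sent strictly
between `σ(i)` and `σ(j)`. -/
def IsEmptyRect (r : GridRect N) : Prop :=
  ¬ ∃ c : Fin N, r.i < c ∧ c < r.j ∧ r.perm r.i < r.perm c ∧ r.perm c < r.perm r.j

/-- A planar rectangle is thin if `j = i + 1`. -/
def Thin (r : GridRect N) : Prop := (r.j : ℕ) = (r.i : ℕ) + 1

end GridRect

/-- The pairs `(r1, r2)` and `(r3, r4)` form a square: they are distinct ordered pairs,
`r1 : x → y`, `r2 : y → z`, `r3 : x → y'`, `r4 : y' → z` with `z ≠ x`, and the domains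
satisfy `D(r1) + D(r2) = D(r3) + D(r4)` pointwise. -/
def IsSquareOf {N : ℕ} (r1 r2 r3 r4 : GridRect N) : Prop :=
  (r1, r2) ≠ (r3, r4) ∧
  r3.perm = r1.perm ∧
  r2.perm = r1.endPerm ∧
  r4.perm = r3.endPerm ∧
  r4.endPerm = r2.endPerm ∧
  r2.endPerm ≠ r1.perm ∧
  ∀ p : Fin N × Fin N, r1.dom p + r2.dom p = r3.dom p + r4.dom p

/-- The set `Σ` of generators `σ` (0-indexed: columns/rows `0,…,m+n−1`) with
`σ(j) ∈ {0,…,m}` for `j < m` and `σ(j) ∈ {m−1,…,m+n−1}` for `j ≥ m`. -/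
def GenSet (m n : ℕ) : Set (Equiv.Perm (Fin (m + n))) :=
  {σ | ∀ j : Fin (m + n), ((j : ℕ) < m → (σ j : ℕ) ≤ m) ∧ (m ≤ (j : ℕ) → m ≤ (σ j : ℕ) + 1)}

/-- The set `F'` of rectangles with both endpoint generators in `Σ`. -/
def FSet (m n : ℕ) : Set (GridRect (m + n)) :=
  {r | r.perm ∈ GenSet m n ∧ r.endPerm ∈ GenSet m n}

/-- The set of planar thin rectangles in `F'`. -/
def PTSet (m n : ℕ) : Set (GridRect (m + n)) :=
  {r | r ∈ FSet m n ∧ r.Planar ∧ r.Thin}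

/-- The set of planar empty rectangles in `F'`. -/
def PESet (m n : ℕ) : Set (GridRect (m + n)) :=
  {r | r ∈ FSet m n ∧ r.Planar ∧ r.IsEmptyRect}

open Equiv (Perm swap)

lemma fin_sub_lt_sub_iff {N : ℕ} {a i j : Fin N} (hij : i < j) :
    a - i < j - i ↔ i ≤ a ∧ a < j := by
  rcases le_or_gt i a with hia | hai
  · rw [Fin.lt_def, Fin.sub_val_of_le hia, Fin.sub_val_of_le hij.le]
    omega
  · have ha : ((a - i : Fin N) : ℕ) = N + a - i := Fin.coe_sub_iff_lt.mpr hai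
    rw [Fin.lt_def, ha, Fin.sub_val_of_le hij.le]
    omega

lemma mul_swap_mul_swap_left {α : Type*} [DecidableEq α] (σ : Perm α) {i j k : α}
    (hij : i ≠ j) (hkj : k ≠ j) : σ * swap i j * swap i k = σ * swap i k * swap k j := by
  have h := Equiv.swap_mul_eq_mul_swap (swap i k) i j
  simp only [Equiv.swap_inv, Equiv.swap_apply_left,
    Equiv.swap_apply_of_ne_of_ne hij.symm hkj.symm] at h
  rw [mul_assoc, h, mul_assoc]

lemma mul_swap_mul_swap_right {α : Type*} [DecidableEq α] (σ : Perm α) {i j k : α}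
    (hij : i ≠ j) (hik : i ≠ k) : σ * swap i j * swap k j = σ * swap k j * swap i k := by
  simpa only [Equiv.swap_comm] using mul_swap_mul_swap_left σ hij.symm hik.symm

lemma indicator_union_prod_add_indicator_prod {α β : Type*} {A A' : Set α} {C C' : Set β}
    (hA : Disjoint A A') (hC : Disjoint C C') :
    ((A ∪ A') ×ˢ C).indicator (1 : α × β → ℕ) + (A ×ˢ C').indicator 1 =
      (A ×ˢ (C ∪ C')).indicator 1 + (A' ×ˢ C).indicator 1 := by
  funext p
  have hA' : p.1 ∈ A → p.1 ∉ A' := fun h => Set.disjoint_left.mp hA h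
  have hC' : p.2 ∈ C → p.2 ∉ C' := fun h => Set.disjoint_left.mp hC h
  by_cases h₁ : p.1 ∈ A <;> by_cases h₂ : p.1 ∈ A' <;> by_cases h₃ : p.2 ∈ C <;>
    by_cases h₄ : p.2 ∈ C' <;> simp_all

namespace GridRect

variable {N : ℕ}

lemma endPerm_eq_mul (r : GridRect N) : r.endPerm = r.perm * swap r.i r.j := rfl

/-- The columns `C` of a planar rectangle, as a non-cyclic interval. -/
def cols (r : GridRect N) : Set (Fin N) := Set.Ico r.i r.j

/-- The rows `R` of a planar rectangle, as a non-cyclic interval. -/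
def rows (r : GridRect N) : Set (Fin N) := Set.Ico (r.perm r.i) (r.perm r.j)

lemma Planar.dom_eq_indicator {r : GridRect N} (h : r.Planar) :
    r.dom = (r.cols ×ˢ r.rows).indicator 1 := by
  classical
  funext p
  simp only [dom, cols, rows, fin_sub_lt_sub_iff h.1, fin_sub_lt_sub_iff h.2,
    Set.indicator_apply, Set.mem_prod, Set.mem_Ico, Pi.one_apply]

lemma Planar.eq_i_of_perm_lt_endPerm {r : GridRect N} (h : r.Planar) {c : Fin N}
    (hc : r.perm c < r.endPerm c) : c = r.i := by
  by_contra hi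
  rcases eq_or_ne c r.j with rfl | hj
  · simp only [endPerm_eq_mul, Equiv.Perm.mul_apply, Equiv.swap_apply_right] at hc
    exact hc.asymm h.2
  · simp [endPerm_eq_mul, Equiv.swap_apply_of_ne_of_ne hi hj] at hc

lemma Planar.eq_j_of_endPerm_lt_perm {r : GridRect N} (h : r.Planar) {c : Fin N}
    (hc : r.endPerm c < r.perm c) : c = r.j := by
  by_contra hj
  rcases eq_or_ne c r.i with rfl | hi
  · simp only [endPerm_eq_mul, Equiv.Perm.mul_apply, Equiv.swap_apply_left] at hc
    exact hc.asymm h.2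
  · simp [endPerm_eq_mul, Equiv.swap_apply_of_ne_of_ne hi hj] at hc

lemma Planar.endPerm_ne {r s : GridRect N} (hr : r.Planar) (hs : s.Planar)
    (hrs : s.perm = r.endPerm) : s.endPerm ≠ r.perm := by
  intro h
  have hi : s.i = r.j := by
    apply hr.eq_j_of_endPerm_lt_perm
    simpa [← hrs, ← h, endPerm_eq_mul] using hs.2
  have hj : s.j = r.i := by
    apply hr.eq_i_of_perm_lt_endPerm
    simpa [← hrs, ← h, endPerm_eq_mul] using hs.2
  exact hr.1.asymm (hi ▸ hj ▸ hs.1)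

lemma Thin.isEmptyRect {r : GridRect N} (h : r.Thin) : r.IsEmptyRect := by
  rintro ⟨c, hic, hcj, -⟩
  unfold Thin at h
  omega

lemma isEmptyRect_iff {σ : Perm (Fin N)} {i j : Fin N} {hij : i ≠ j} :
    (mk σ i j hij).IsEmptyRect ↔ ∀ c, i < c → c < j → σ c < σ i ∨ σ j < σ c := by
  simp only [IsEmptyRect, not_exists, not_and, not_lt]
  refine forall_congr' fun c => forall₂_congr fun hic hcj => ?_
  have hi : σ c ≠ σ i := σ.injective.ne hic.ne'
  have hj : σ c ≠ σ j := σ.injective.ne hcj.ne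
  grind

/-- The domains of `r` and `t` form an L-shaped region, which is cut in the other way into the
domains of `t'` and `r'`. -/
structure IsLShape (r t t' r' : GridRect N) : Prop where
  planar_r : r.Planar
  planar_t : t.Planar
  planar_t' : t'.Planar
  planar_r' : r'.Planar
  cols_r : r.cols = t.cols ∪ r'.cols
  disjoint_cols : Disjoint t.cols r'.cols
  cols_t' : t'.cols = t.cols
  rows_t' : t'.rows = r.rows ∪ t.rows
  disjoint_rows : Disjoint r.rows t.rows
  rows_r' : r'.rows = r.rows

lemma IsLShape.dom_add_dom {r t t' r' : GridRect N} (h : IsLShape r t t' r') :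
    r.dom + t.dom = t'.dom + r'.dom := by
  rw [h.planar_r.dom_eq_indicator, h.planar_t.dom_eq_indicator, h.planar_t'.dom_eq_indicator,
    h.planar_r'.dom_eq_indicator, h.cols_r, h.cols_t', h.rows_t', h.rows_r']
  exact indicator_union_prod_add_indicator_prod h.disjoint_cols h.disjoint_rows

lemma IsLShape.isSquareOf {r t t' r' : GridRect N} (h : IsLShape r t t' r')
    (ht' : t'.perm = r.perm) (ht : t.perm = r.endPerm) (hr' : r'.perm = t'.endPerm)
    (hend : r'.endPerm = t.endPerm) : IsSquareOf r t t' r' := by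
  refine ⟨fun heq => ?_, ht', ht, hr', hend, h.planar_r.endPerm_ne h.planar_t ht,
    congrFun h.dom_add_dom⟩
  have hmem : r'.i ∈ r'.cols := Set.left_mem_Ico.mpr h.planar_r'.1
  have hcols : r.cols = t.cols := by rw [(Prod.mk.inj heq).1, h.cols_t']
  exact Set.disjoint_right.mp h.disjoint_cols hmem (hcols ▸ h.cols_r ▸ Or.inr hmem)

lemma IsLShape.isSquareOf_reverse {r t t' r' : GridRect N} (h : IsLShape r t t' r')
    (hr' : r'.perm = t.perm) (hr : r.perm = t.endPerm) (ht' : t'.perm = r'.endPerm)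
    (hend : t'.endPerm = r.endPerm) : IsSquareOf t r r' t' := by
  refine ⟨fun heq => ?_, hr', hr, ht', hend, h.planar_t.endPerm_ne h.planar_r hr, fun p => ?_⟩
  · have hmem : r'.i ∈ r'.cols := Set.left_mem_Ico.mpr h.planar_r'.1
    exact Set.disjoint_right.mp h.disjoint_cols hmem ((Prod.mk.inj heq).1 ▸ hmem)
  · simpa only [Pi.add_apply, add_comm] using congrFun h.dom_add_dom p

variable {σ : Perm (Fin N)} {i j k : Fin N}

lemma isLShape_left_above (hik : i < k) (hkj : k < j) (hij : σ i < σ j) (hjk : σ j < σ k) :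
    IsLShape (mk σ i j (hik.trans hkj).ne) (mk (σ * swap i j) i k hik.ne)
      (mk σ i k hik.ne) (mk (σ * swap i k) k j hkj.ne) := by
  have hcols := hik.trans hkj
  have hrows := hij.trans hjk
  constructor <;>
    simp [Planar, cols, rows, LT.lt.le, LT.lt.ne, LT.lt.ne', Equiv.swap_apply_of_ne_of_ne,
      Set.Ico_union_Ico_eq_Ico, *]

lemma isLShape_left_below (hik : i < k) (hkj : k < j) (hki : σ k < σ i) (hij : σ i < σ j) :
    IsLShape (mk σ i j (hik.trans hkj).ne) (mk (σ * swap i k) i k hik.ne)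
      (mk (σ * swap i j * swap i k) i k hik.ne)
      (mk (σ * swap i k) k j hkj.ne) := by
  have hcols := hik.trans hkj
  have hrows := hki.trans hij
  constructor <;>
    simp [Planar, cols, rows, LT.lt.le, LT.lt.ne, LT.lt.ne', Equiv.swap_apply_of_ne_of_ne,
      Set.Ico_union_Ico_eq_Ico, Set.union_comm (Set.Ico (σ i) _),
      Set.Ico_disjoint_Ico_same.symm, *]

lemma isLShape_right_above (hik : i < k) (hkj : k < j) (hij : σ i < σ j) (hjk : σ j < σ k) :
    IsLShape (mk σ i j (hik.trans hkj).ne) (mk (σ * swap k j) k j hkj.ne)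
      (mk (σ * swap i j * swap k j) k j hkj.ne)
      (mk (σ * swap k j) i k hik.ne) := by
  have hcols := hik.trans hkj
  have hrows := hij.trans hjk
  constructor <;>
    simp [Planar, cols, rows, LT.lt.le, LT.lt.ne, LT.lt.ne', Equiv.swap_apply_of_ne_of_ne,
      Set.Ico_union_Ico_eq_Ico, Set.union_comm (Set.Ico k _), Set.Ico_disjoint_Ico_same.symm, *]

lemma isLShape_right_below (hik : i < k) (hkj : k < j) (hki : σ k < σ i) (hij : σ i < σ j) :
    IsLShape (mk σ i j (hik.trans hkj).ne) (mk (σ * swap i j) k j hkj.ne)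
      (mk σ k j hkj.ne) (mk (σ * swap k j) i k hik.ne) := by
  have hcols := hik.trans hkj
  have hrows := hki.trans hij
  constructor <;>
    simp [Planar, cols, rows, LT.lt.le, LT.lt.ne, LT.lt.ne', Equiv.swap_apply_of_ne_of_ne,
      Set.Ico_union_Ico_eq_Ico, Set.union_comm (Set.Ico k _), Set.union_comm (Set.Ico (σ i) _),
      Set.Ico_disjoint_Ico_same.symm, *]

/-- The planar empty rectangles with both end generators in `S`. -/
def planarEmptyIn (S : Set (Perm (Fin N))) : Set (GridRect N) :=
  {r | (r.perm ∈ S ∧ r.endPerm ∈ S) ∧ r.Planar ∧ r.IsEmptyRect}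

/-- The planar thin rectangles with both end generators in `S`. -/
def planarThinIn (S : Set (Perm (Fin N))) : Set (GridRect N) :=
  {r | (r.perm ∈ S ∧ r.endPerm ∈ S) ∧ r.Planar ∧ r.Thin}

variable {S : Set (Perm (Fin N))}

lemma planarThinIn_subset_planarEmptyIn : planarThinIn S ⊆ planarEmptyIn S :=
  fun _ h => ⟨h.1, h.2.1, h.2.2.isEmptyRect⟩

/-- `S` is stable under exchanging the values of its generators at the columns `a` and `b`. -/
def SwapStable (S : Set (Perm (Fin N))) (a b : Fin N) : Prop :=
  ∀ σ ∈ S, σ * swap a b ∈ S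

lemma swap_left_mem_planarEmptyIn (hik : i < k) (hkj : k < j) (hS : SwapStable S i k)
    (hr : mk σ i j (hik.trans hkj).ne ∈ planarEmptyIn S) :
    mk (σ * swap i k) k j hkj.ne ∈ planarEmptyIn S := by
  obtain ⟨⟨hσ, hσ'⟩, ⟨-, hlt⟩, hempty⟩ := hr
  have hj : swap i k j = j := Equiv.swap_apply_of_ne_of_ne (hik.trans hkj).ne' hkj.ne'
  refine ⟨⟨hS σ hσ, ?_⟩, ⟨hkj, by simpa [hj] using hlt⟩, isEmptyRect_iff.mpr fun c hkc hcj => ?_⟩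
  · exact Set.mem_of_eq_of_mem (mul_swap_mul_swap_left σ (hik.trans hkj).ne hkj.ne).symm (hS _ hσ')
  · simpa [hj, Equiv.swap_apply_of_ne_of_ne (hik.trans hkc).ne' hkc.ne'] using
      isEmptyRect_iff.mp hempty c (hik.trans hkc) hcj

lemma swap_right_mem_planarEmptyIn (hik : i < k) (hkj : k < j) (hS : SwapStable S k j)
    (hr : mk σ i j (hik.trans hkj).ne ∈ planarEmptyIn S) :
    mk (σ * swap k j) i k hik.ne ∈ planarEmptyIn S := by
  obtain ⟨⟨hσ, hσ'⟩, ⟨-, hlt⟩, hempty⟩ := hr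
  have hi : swap k j i = i := Equiv.swap_apply_of_ne_of_ne hik.ne (hik.trans hkj).ne
  refine ⟨⟨hS σ hσ, ?_⟩, ⟨hik, by simpa [hi] using hlt⟩, isEmptyRect_iff.mpr fun c hic hck => ?_⟩
  · exact Set.mem_of_eq_of_mem (mul_swap_mul_swap_right σ (hik.trans hkj).ne hik.ne).symm (hS _ hσ')
  · simpa [hi, Equiv.swap_apply_of_ne_of_ne hck.ne (hck.trans hkj).ne] using
      isEmptyRect_iff.mp hempty c hic (hck.trans hkj)

/-- The comparison functions on the planar empty rectangles with both ends in `S`: equal to `1` on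
thin rectangles and multiplicative on squares. -/
structure IsComparison {M : Type*} [MulOneClass M] (S : Set (Perm (Fin N)))
    (B : GridRect N → M) : Prop where
  eq_one_of_thin : ∀ r ∈ planarThinIn S, B r = 1
  mul_eq_mul : ∀ r₁ r₂ r₃ r₄ : GridRect N, IsSquareOf r₁ r₂ r₃ r₄ →
    r₁ ∈ planarEmptyIn S → r₂ ∈ planarEmptyIn S → r₃ ∈ planarEmptyIn S → r₄ ∈ planarEmptyIn S →
      B r₁ * B r₂ = B r₃ * B r₄

section IsComparison

variable {M : Type*} [MulOneClass M] {B : GridRect N → M} {r t t' r' : GridRect N}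

lemma IsComparison.eq_of_isSquareOf_of_thin_inner (hB : IsComparison S B)
    (hsq : IsSquareOf r t t' r') (hr : r ∈ planarEmptyIn S) (ht : t ∈ planarThinIn S)
    (ht' : t' ∈ planarThinIn S) (hr' : r' ∈ planarEmptyIn S) : B r = B r' := by
  simpa [hB.eq_one_of_thin t ht, hB.eq_one_of_thin t' ht'] using
    hB.mul_eq_mul _ _ _ _ hsq hr (planarThinIn_subset_planarEmptyIn ht)
      (planarThinIn_subset_planarEmptyIn ht') hr'

lemma IsComparison.eq_of_isSquareOf_of_thin_outer (hB : IsComparison S B)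
    (hsq : IsSquareOf t r r' t') (hr : r ∈ planarEmptyIn S) (ht : t ∈ planarThinIn S)
    (ht' : t' ∈ planarThinIn S) (hr' : r' ∈ planarEmptyIn S) : B r = B r' := by
  simpa [hB.eq_one_of_thin t ht, hB.eq_one_of_thin t' ht'] using
    hB.mul_eq_mul _ _ _ _ hsq (planarThinIn_subset_planarEmptyIn ht) hr hr'
      (planarThinIn_subset_planarEmptyIn ht')

lemma IsComparison.eq_swap_left (hB : IsComparison S B) (hki : (k : ℕ) = i + 1) (hik : i < k)
    (hkj : k < j) (hS : SwapStable S i k)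
    (hr : GridRect.mk σ i j (hik.trans hkj).ne ∈ planarEmptyIn S) :
    B (GridRect.mk σ i j (hik.trans hkj).ne) = B (GridRect.mk (σ * swap i k) k j hkj.ne) := by
  have hr' := swap_left_mem_planarEmptyIn hik hkj hS hr
  have ⟨⟨hσ, hσ'⟩, ⟨_, hσij⟩, hempty⟩ := hr
  have hperm : σ * swap i j * swap i k = σ * swap i k * swap k j :=
    mul_swap_mul_swap_left σ (hik.trans hkj).ne hkj.ne
  rcases isEmptyRect_iff.mp hempty k hik hkj with hbelow | habove
  · have hL := isLShape_left_below hik hkj hbelow hσij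
    have hw : σ * swap i k * swap i k = σ := Equiv.mul_swap_mul_self i k σ
    have hz := Equiv.mul_swap_mul_self i k (σ * swap i j)
    exact hB.eq_of_isSquareOf_of_thin_outer (hL.isSquareOf_reverse rfl hw.symm hperm hz) hr
      ⟨⟨hS _ hσ, Set.mem_of_eq_of_mem hw hσ⟩, hL.planar_t, hki⟩
      ⟨⟨hS _ hσ', Set.mem_of_eq_of_mem hz hσ'⟩, hL.planar_t', hki⟩ hr'
  · have hL := isLShape_left_above hik hkj hσij habove
    exact hB.eq_of_isSquareOf_of_thin_inner (hL.isSquareOf rfl rfl rfl hperm.symm) hr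
      ⟨⟨hσ', hS _ hσ'⟩, hL.planar_t, hki⟩ ⟨⟨hσ, hS _ hσ⟩, hL.planar_t', hki⟩ hr'

lemma IsComparison.eq_swap_right (hB : IsComparison S B) (hjk : (j : ℕ) = k + 1) (hik : i < k)
    (hkj : k < j) (hS : SwapStable S k j)
    (hr : GridRect.mk σ i j (hik.trans hkj).ne ∈ planarEmptyIn S) :
    B (GridRect.mk σ i j (hik.trans hkj).ne) = B (GridRect.mk (σ * swap k j) i k hik.ne) := by
  have hr' := swap_right_mem_planarEmptyIn hik hkj hS hr
  have ⟨⟨hσ, hσ'⟩, ⟨_, hσij⟩, hempty⟩ := hr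
  have hperm : σ * swap i j * swap k j = σ * swap k j * swap i k :=
    mul_swap_mul_swap_right σ (hik.trans hkj).ne hik.ne
  rcases isEmptyRect_iff.mp hempty k hik hkj with hbelow | habove
  · have hL := isLShape_right_below hik hkj hbelow hσij
    exact hB.eq_of_isSquareOf_of_thin_inner (hL.isSquareOf rfl rfl rfl hperm.symm) hr
      ⟨⟨hσ', hS _ hσ'⟩, hL.planar_t, hjk⟩ ⟨⟨hσ, hS _ hσ⟩, hL.planar_t', hjk⟩ hr'
  · have hL := isLShape_right_above hik hkj hσij habove
    have hw : σ * swap k j * swap k j = σ := Equiv.mul_swap_mul_self k j σ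
    have hz := Equiv.mul_swap_mul_self k j (σ * swap i j)
    exact hB.eq_of_isSquareOf_of_thin_outer (hL.isSquareOf_reverse rfl hw.symm hperm hz) hr
      ⟨⟨hS _ hσ, Set.mem_of_eq_of_mem hw hσ⟩, hL.planar_t, hjk⟩
      ⟨⟨hS _ hσ', Set.mem_of_eq_of_mem hz hσ'⟩, hL.planar_t', hjk⟩ hr'

lemma IsComparison.exists_narrower_eq {p : ℕ} (hB : IsComparison S B)
    (hS : ∀ a b : Fin N, (b : ℕ) = a + 1 → (b : ℕ) ≠ p → SwapStable S a b)
    (hr : r ∈ planarEmptyIn S) (hthin : ¬ r.Thin) :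
    ∃ s ∈ planarEmptyIn S, (s.j : ℕ) - s.i < r.j - r.i ∧ B r = B s := by
  obtain ⟨σ, i, j, hij⟩ := r
  have hlt : (i : ℕ) < j := hr.2.1.1
  simp only [Thin] at hthin ⊢
  by_cases hp : (i : ℕ) + 1 = p
  · obtain ⟨k, hjk⟩ : ∃ k : Fin N, (j : ℕ) = k + 1 := ⟨⟨j - 1, by omega⟩, by simp only; omega⟩
    have hik : i < k := by omega
    have hkj : k < j := by omega
    have hstable := hS k j hjk (by omega)
    exact ⟨_, swap_right_mem_planarEmptyIn hik hkj hstable hr, by simp only; omega,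
      hB.eq_swap_right hjk hik hkj hstable hr⟩
  · obtain ⟨k, hki⟩ : ∃ k : Fin N, (k : ℕ) = i + 1 := ⟨⟨i + 1, by omega⟩, rfl⟩
    have hik : i < k := by omega
    have hkj : k < j := by omega
    have hstable := hS i k hki (by omega)
    exact ⟨_, swap_left_mem_planarEmptyIn hik hkj hstable hr, by simp only; omega,
      hB.eq_swap_left hki hik hkj hstable hr⟩

end IsComparison

end GridRect

lemma GenSet.swapStable {m n : ℕ} {a b : Fin (m + n)} (hab : (a : ℕ) < m ↔ (b : ℕ) < m) :
    GridRect.SwapStable (GenSet m n) a b := by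
  intro σ hσ c
  have hc := hσ (Equiv.swap a b c)
  have hblock : ((Equiv.swap a b c : Fin (m + n)) : ℕ) < m ↔ (c : ℕ) < m := by
    rw [Equiv.swap_apply_def]
    split_ifs with hca hcb <;> simp [*]
  exact ⟨fun h => hc.1 (hblock.mpr h), fun h => hc.2 (by omega)⟩

open GridRect in
theorem comparison_function_is_one_general {N p : ℕ} {S : Set (Equiv.Perm (Fin N))}
    {M : Type*} [MulOneClass M] {B : GridRect N → M}
    (hS : ∀ a b : Fin N, (b : ℕ) = a + 1 → (b : ℕ) ≠ p → SwapStable S a b)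
    (hB : IsComparison S B) : ∀ r ∈ planarEmptyIn S, B r = 1 := by
  intro r hr
  induction hd : (r.j : ℕ) - r.i using Nat.strong_induction_on generalizing r with
  | _ d ih =>
    by_cases hthin : r.Thin
    · exact hB.eq_one_of_thin r ⟨hr.1, hr.2.1, hthin⟩
    · obtain ⟨s, hs, hlt, heq⟩ := hB.exists_narrower_eq hS hr hthin
      rw [heq, ih _ (hd ▸ hlt) s hs rfl]

/-- If `B` is a `{1,−1}`-valued map on the planar empty rectangles in `F'` which equals `1`
on every planar thin rectangle in `F'`, and satisfies `B(r1)·B(r2) = B(r3)·B(r4)` whenever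
`(r1,r2)` and `(r3,r4)` form a square all four of whose rectangles are planar, empty, and
in `F'`, then `B` equals `1` on every planar empty rectangle in `F'`. -/
theorem comparison_function_is_one (m n : ℕ) (hm : 1 ≤ m) (hn : 1 ≤ n)
    (B : GridRect (m + n) → ℤ)
    (hval : ∀ r ∈ PESet m n, B r = 1 ∨ B r = -1)
    (hthin : ∀ r ∈ PTSet m n, B r = 1)
    (hsq : ∀ r1 r2 r3 r4 : GridRect (m + n), IsSquareOf r1 r2 r3 r4 →
      r1 ∈ PESet m n → r2 ∈ PESet m n → r3 ∈ PESet m n → r4 ∈ PESet m n →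
      B r1 * B r2 = B r3 * B r4) :
    ∀ r ∈ PESet m n, B r = 1 :=
  comparison_function_is_one_general (p := m)
    (fun a b hab hbm => GenSet.swapStable (by omega)) ⟨hthin, hsq⟩
end

section
/- Let m, n ≥ 1, set N = m + n, and let r be a planar empty rectangle in F' of width k ≥ 2, from a generator x to a generator y. Then there exist planar empty rectangles r1, r2, r3 in F', each of width strictly less than k, such that either the pairs (r, r1) and (r2, r3) form a square (with r1 from y to some generator w, r2 from x to some generator v, and r3 from v to w), or the pairs (r1, r) and (r2, r3) form a square (with r1 from some generator w to x, r2 from w to some generator v, and r3 from v to y). -/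
namespace GridRect

variable {N : ℕ}

/-- The width of a planar rectangle. -/
def width (r : GridRect N) : ℕ := (r.j : ℕ) - (r.i : ℕ)

end GridRect
/-!
Write `σ^{ij} = σ * swap i j`, and let `i < c < j` be columns on which `σ` is increasing. The two
ways of cutting an L-shaped region into two rectangles give two squares starting at `σ`, whose
second flows are `r(σ^{cj}, i, j)` and `r(σ^{ic}, i, j)`.

Let now `r = r(x, i, j)` be planar, empty and of width at least 2. Every column strictly between
`i` and `j` is sent by `x` above or below the rows of `r`. If some column is sent above, let `c` be
the last one; then `σ = x^{cj}` is increasing on `i, c, j`, and `r` is the second flow of the first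
square. Otherwise `c = i + 1` is sent below, and `σ = x^{ic}` puts `r` into the second square.
The generators of both squares other than the ends of `r` arise from these by undoing an inversion.
This preserves `Σ`, since the cells allowed by `Σ` form a sublattice of the grid.
-/

open Equiv Set

theorem indicator_Ico_add_indicator_Ico {α M : Type*} [LinearOrder α] [AddZeroClass M]
    {a b c : α} (hab : a ≤ b) (hbc : b ≤ c) (f : α → M) (x : α) :
    (Ico a b).indicator f x + (Ico b c).indicator f x = (Ico a c).indicator f x := by
  rw [← Ico_union_Ico_eq_Ico hab hbc,
    indicator_union_of_disjoint (Ico_disjoint_Ico_same (a := a))]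

theorem fin_sub_lt_sub_iff_mem_Ico {N : ℕ} {a b : Fin N} (hab : a < b) (p : Fin N) :
    p - a < b - a ↔ p ∈ Ico a b := by
  rw [Fin.lt_def, Fin.sub_val_of_le hab.le, mem_Ico]
  rcases le_or_gt a p with hap | hpa
  · rw [Fin.sub_val_of_le hap]
    lia
  · rw [Fin.coe_sub_iff_lt.2 hpa]
    lia

namespace GridRect

variable {N : ℕ} {r : GridRect N}

theorem Planar.dom_eq_indicator_mul (hr : r.Planar) (p : Fin N × Fin N) :
    r.dom p = (Ico r.i r.j).indicator 1 p.1 * (Ico (r.perm r.i) (r.perm r.j)).indicator 1 p.2 := by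
  classical
  simp only [dom, fin_sub_lt_sub_iff_mem_Ico hr.1, fin_sub_lt_sub_iff_mem_Ico hr.2,
    indicator_apply, Pi.one_apply, ite_zero_mul_ite_zero, mul_one]

theorem isEmptyRect_iff_s4 :
    r.IsEmptyRect ↔ ∀ k ∈ Ioo r.i r.j, r.perm k ∉ Ioo (r.perm r.i) (r.perm r.j) := by
  simp [IsEmptyRect]

theorem IsEmptyRect.lt_or_lt (he : r.IsEmptyRect) {k : Fin N} (hk : k ∈ Ioo r.i r.j) :
    r.perm k < r.perm r.i ∨ r.perm r.j < r.perm k := by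
  by_contra! h
  exact isEmptyRect_iff_s4.1 he k hk ⟨h.1.lt_of_ne (r.perm.injective.ne hk.1.ne),
    h.2.lt_of_ne (r.perm.injective.ne hk.2.ne)⟩

theorem exists_covBy_lt_of_two_le_width (hw : 2 ≤ r.width) : ∃ c, r.i ⋖ c ∧ c < r.j := by
  have hij : (r.i : ℕ) + 1 < r.j := by
    unfold width at hw
    lia
  exact ⟨⟨r.i + 1, by lia⟩, by simp, hij⟩

/-- The planar empty rectangles of width less than `k` whose two generators lie in `G`. For
`G = Σ` these are the rectangles of `F'` which are planar, empty and narrower than `k`. -/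
def planarEmptyBelow (G : Set (Perm (Fin N))) (k : ℕ) : Set (GridRect N) :=
  {r | (r.perm ∈ G ∧ r.endPerm ∈ G) ∧ r.Planar ∧ r.IsEmptyRect ∧ r.width < k}

theorem mk_mem_planarEmptyBelow {G : Set (Perm (Fin N))} {k : ℕ} {σ : Perm (Fin N)} {i j : Fin N}
    (hσ : σ ∈ G) (hσ' : σ * swap i j ∈ G) (hij : i < j) (hσij : σ i < σ j)
    (hempty : ∀ c ∈ Ioo i j, σ c ∉ Ioo (σ i) (σ j)) (hw : (j : ℕ) - i < k) :
    (⟨σ, i, j, hij.ne⟩ : GridRect N) ∈ planarEmptyBelow G k :=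
  ⟨⟨hσ, hσ'⟩, ⟨hij, hσij⟩, isEmptyRect_iff_s4.2 hempty, hw⟩

end GridRect

section Square

theorem swap_mul_swap_eq_swap_mul_swap {α : Type*} [DecidableEq α] {a b c : α}
    (hab : a ≠ b) (hac : a ≠ c) : swap a b * swap b c = swap b c * swap a c := by
  rw [mul_swap_eq_swap_mul (swap b c), swap_apply_of_ne_of_ne hab hac, swap_apply_right]

theorem swap_mul_swap_eq_swap_mul_swap' {α : Type*} [DecidableEq α] {a b c : α}
    (hbc : b ≠ c) (hac : a ≠ c) : swap b c * swap a b = swap a b * swap a c := by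
  rw [mul_swap_eq_swap_mul (swap a b), swap_apply_of_ne_of_ne hac.symm hbc.symm, swap_apply_left,
    swap_comm]

variable {N : ℕ} {σ : Perm (Fin N)} {i c j : Fin N}

/-- The region cut in two ways is an L with its corner at the bottom right. -/
theorem isSquareOf_mul_swap_right (hic : i < c) (hcj : c < j) (hσic : σ i < σ c)
    (hσcj : σ c < σ j) :
    IsSquareOf ⟨σ, c, j, hcj.ne⟩ ⟨σ * swap c j, i, j, (hic.trans hcj).ne⟩
      ⟨σ, i, c, hic.ne⟩ ⟨σ * swap i c, c, j, hcj.ne⟩ := by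
  have hij := hic.trans hcj
  have hi : swap c j i = i := swap_apply_of_ne_of_ne hic.ne hij.ne
  have hj : swap i c j = j := swap_apply_of_ne_of_ne hij.ne' hcj.ne'
  refine ⟨by simp [hic.ne'], rfl, rfl, rfl, ?_, fun h ↦ ?_, fun p ↦ ?_⟩
  · change σ * swap i c * swap c j = σ * swap c j * swap i j
    rw [mul_assoc, swap_mul_swap_eq_swap_mul_swap hic.ne hij.ne, mul_assoc]
  · have h_apply : σ (swap c j (swap i j i)) = σ i := congr($h i)
    simp [hic.ne'] at h_apply
  · rw [GridRect.Planar.dom_eq_indicator_mul ⟨hcj, hσcj⟩,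
      GridRect.Planar.dom_eq_indicator_mul ⟨hij, by simpa [hi] using hσic⟩,
      GridRect.Planar.dom_eq_indicator_mul ⟨hic, hσic⟩,
      GridRect.Planar.dom_eq_indicator_mul ⟨hcj, by simpa [hj] using hσic.trans hσcj⟩]
    simp only [Perm.mul_apply, hi, hj, swap_apply_right]
    rw [← indicator_Ico_add_indicator_Ico hic.le hcj.le,
      ← indicator_Ico_add_indicator_Ico hσic.le hσcj.le]
    ring

/-- The region cut in two ways is an L with its corner at the top left. -/
theorem isSquareOf_mul_swap_left (hic : i < c) (hcj : c < j) (hσic : σ i < σ c)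
    (hσcj : σ c < σ j) :
    IsSquareOf ⟨σ, i, c, hic.ne⟩ ⟨σ * swap i c, i, j, (hic.trans hcj).ne⟩
      ⟨σ, c, j, hcj.ne⟩ ⟨σ * swap c j, i, c, hic.ne⟩ := by
  have hij := hic.trans hcj
  have hi : swap c j i = i := swap_apply_of_ne_of_ne hic.ne hij.ne
  have hj : swap i c j = j := swap_apply_of_ne_of_ne hij.ne' hcj.ne'
  refine ⟨by simp [hic.ne], rfl, rfl, rfl, ?_, fun h ↦ ?_, fun p ↦ ?_⟩
  · change σ * swap c j * swap i c = σ * swap i c * swap i j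
    rw [mul_assoc, swap_mul_swap_eq_swap_mul_swap' hcj.ne hij.ne, mul_assoc]
  · have h_apply : σ (swap i c (swap i j i)) = σ i := congr($h i)
    simp [hj, hij.ne'] at h_apply
  · rw [GridRect.Planar.dom_eq_indicator_mul ⟨hic, hσic⟩,
      GridRect.Planar.dom_eq_indicator_mul ⟨hij, by simpa [hj] using hσcj⟩,
      GridRect.Planar.dom_eq_indicator_mul ⟨hcj, hσcj⟩,
      GridRect.Planar.dom_eq_indicator_mul ⟨hic, by simpa [hi] using hσic.trans hσcj⟩]
    simp only [Perm.mul_apply, hi, hj, swap_apply_left]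
    rw [← indicator_Ico_add_indicator_Ico hic.le hcj.le,
      ← indicator_Ico_add_indicator_Ico hσic.le hσcj.le]
    ring

end Square

section Uncrossing

variable {N : ℕ}

/-- Closure of a set of generators under undoing inversions: if `σ ∈ G` sends the columns `p < q`
to rows in decreasing order, then `σ^{pq} ∈ G`. -/
def UncrossingClosed (G : Set (Perm (Fin N))) : Prop :=
  ∀ ⦃σ⦄, σ ∈ G → ∀ ⦃p q⦄, p < q → σ q < σ p → σ * swap p q ∈ G

theorem uncrossingClosed_of_isSublattice {L : Set (Fin N × Fin N)} (hL : IsSublattice L) :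
    UncrossingClosed {σ | ∀ k, (k, σ k) ∈ L} := by
  intro σ hσ p q hpq hσqp k
  rcases eq_or_ne k p with rfl | hkp
  · simpa [hpq.le, hσqp.le] using hL.infClosed (hσ k) (hσ q)
  rcases eq_or_ne k q with rfl | hkq
  · simpa [hpq.le, hσqp.le] using hL.supClosed (hσ p) (hσ k)
  · simpa [swap_apply_of_ne_of_ne hkp hkq] using hσ k

/-- The cells (column, row) allowed by `Σ`: the generators in `GenSet m n` are those whose graph
lies in this set. -/
def allowedCells (m n : ℕ) : Set (Fin (m + n) × Fin (m + n)) :=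
  {p | ((p.1 : ℕ) < m → (p.2 : ℕ) ≤ m) ∧ (m ≤ (p.1 : ℕ) → m ≤ (p.2 : ℕ) + 1)}

theorem isSublattice_allowedCells (m n : ℕ) : IsSublattice (allowedCells m n) := by
  constructor <;> rintro ⟨a, b⟩ ⟨hab, hab'⟩ ⟨c, d⟩ ⟨hcd, hcd'⟩ <;>
    simp only [allowedCells, mem_ofPred_eq, Prod.mk_sup_mk, Prod.mk_inf_mk, Fin.coe_max,
      Fin.coe_min] <;> lia

theorem uncrossingClosed_genSet (m n : ℕ) : UncrossingClosed (GenSet m n) :=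
  uncrossingClosed_of_isSublattice (isSublattice_allowedCells m n)

end Uncrossing

section Decomposition

open GridRect

variable {N : ℕ} {G : Set (Perm (Fin N))} {σ : Perm (Fin N)} {i c j : Fin N}

theorem exists_isSquareOf_mul_swap_right (hG : UncrossingClosed G) (hic : i < c) (hcj : c < j)
    (hσic : σ i < σ c) (hσcj : σ c < σ j)
    (hx : σ * swap c j ∈ G) (hy : σ * swap c j * swap i j ∈ G)
    (hleft : ∀ k ∈ Ioo i c, σ k ∉ Ioo (σ i) (σ c))
    (hright : ∀ k ∈ Ioo c j, σ k ∉ Ioo (σ i) (σ j)) :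
    ∃ r₁ ∈ planarEmptyBelow G (j - i), ∃ r₂ ∈ planarEmptyBelow G (j - i),
      ∃ r₃ ∈ planarEmptyBelow G (j - i),
        IsSquareOf r₁ ⟨σ * swap c j, i, j, (hic.trans hcj).ne⟩ r₂ r₃ := by
  have hσij := hσic.trans hσcj
  have hj : swap i c j = j := swap_apply_of_ne_of_ne (hic.trans hcj).ne' hcj.ne'
  have hright' : ∀ k ∈ Ioo c j, (σ * swap i c) k = σ k := fun k hk ↦
    congrArg σ (swap_apply_of_ne_of_ne (hic.trans hk.1).ne' hk.1.ne')
  rw [mul_assoc, ← swap_mul_swap_eq_swap_mul_swap hic.ne (hic.trans hcj).ne, ← mul_assoc] at hy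
  have hσ : σ ∈ G := by simpa using hG hx hcj (by simpa using hσcj)
  have hv : σ * swap i c ∈ G := by simpa using hG hy hcj (by simpa [hj] using hσij)
  refine ⟨_, mk_mem_planarEmptyBelow hσ hx hcj hσcj ?_ (by lia),
    _, mk_mem_planarEmptyBelow hσ hv hic hσic hleft (by lia),
    _, mk_mem_planarEmptyBelow hv hy hcj (by simpa [hj] using hσij) ?_ (by lia),
    isSquareOf_mul_swap_right hic hcj hσic hσcj⟩
  · exact fun k hk hσk ↦ hright k hk (Ioo_subset_Ioo_left hσic.le hσk)
  · intro k hk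
    rw [hright' k hk]
    simpa [hj] using hright k hk

theorem exists_isSquareOf_mul_swap_left (hG : UncrossingClosed G) (hic : i < c) (hcj : c < j)
    (hσic : σ i < σ c) (hσcj : σ c < σ j)
    (hx : σ * swap i c ∈ G) (hy : σ * swap i c * swap i j ∈ G)
    (hleft : ∀ k ∈ Ioo i c, σ k ∉ Ioo (σ i) (σ j))
    (hright : ∀ k ∈ Ioo c j, σ k ∉ Ioo (σ c) (σ j)) :
    ∃ r₁ ∈ planarEmptyBelow G (j - i), ∃ r₂ ∈ planarEmptyBelow G (j - i),
      ∃ r₃ ∈ planarEmptyBelow G (j - i),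
        IsSquareOf r₁ ⟨σ * swap i c, i, j, (hic.trans hcj).ne⟩ r₂ r₃ := by
  have hσij := hσic.trans hσcj
  have hi : swap c j i = i := swap_apply_of_ne_of_ne hic.ne (hic.trans hcj).ne
  have hleft' : ∀ k ∈ Ioo i c, (σ * swap c j) k = σ k := fun k hk ↦
    congrArg σ (swap_apply_of_ne_of_ne hk.2.ne (hk.2.trans hcj).ne)
  rw [mul_assoc, ← swap_mul_swap_eq_swap_mul_swap' hcj.ne (hic.trans hcj).ne, ← mul_assoc] at hy
  have hσ : σ ∈ G := by simpa using hG hx hic (by simpa using hσic)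
  have hv : σ * swap c j ∈ G := by simpa using hG hy hic (by simpa [hi] using hσij)
  refine ⟨_, mk_mem_planarEmptyBelow hσ hx hic hσic ?_ (by lia),
    _, mk_mem_planarEmptyBelow hσ hv hcj hσcj hright (by lia),
    _, mk_mem_planarEmptyBelow hv hy hic (by simpa [hi] using hσij) ?_ (by lia),
    isSquareOf_mul_swap_left hic hcj hσic hσcj⟩
  · exact fun k hk hσk ↦ hleft k hk (Ioo_subset_Ioo_right hσcj.le hσk)
  · intro k hk
    rw [hleft' k hk]
    simpa [hi] using hleft k hk

variable {r : GridRect N}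

theorem exists_isSquareOf_of_last_above (hG : UncrossingClosed G)
    (hr : r.perm ∈ G ∧ r.endPerm ∈ G) (hp : r.Planar) (he : r.IsEmptyRect)
    (hic : r.i < c) (hcj : c < r.j) (hc : r.perm r.j < r.perm c)
    (hlast : ∀ k ∈ Ioo c r.j, r.perm k < r.perm r.i) :
    ∃ r₁ ∈ planarEmptyBelow G r.width, ∃ r₂ ∈ planarEmptyBelow G r.width,
      ∃ r₃ ∈ planarEmptyBelow G r.width, IsSquareOf r₁ r r₂ r₃ := by
  obtain ⟨x, i, j, hij⟩ := r
  obtain ⟨σ, rfl⟩ : ∃ σ, x = σ * swap c j := ⟨x * swap c j, by simp⟩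
  have hi : swap c j i = i := swap_apply_of_ne_of_ne hic.ne hij
  refine exists_isSquareOf_mul_swap_right hG hic hcj (by simpa [hi] using hp.2)
    (by simpa using hc) hr.1 hr.2 (fun k hk ↦ ?_) fun k hk hσk ↦ ?_
  · have hk' : swap c j k = k := swap_apply_of_ne_of_ne hk.2.ne (hk.2.trans hcj).ne
    simpa [hi, hk'] using isEmptyRect_iff_s4.1 he k ⟨hk.1, hk.2.trans hcj⟩
  · have hk' : swap c j k = k := swap_apply_of_ne_of_ne hk.1.ne' hk.2.ne
    exact hσk.1.not_gt (by simpa [hi, hk'] using hlast k hk)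

theorem exists_isSquareOf_of_first_below (hG : UncrossingClosed G)
    (hr : r.perm ∈ G ∧ r.endPerm ∈ G) (hp : r.Planar) (he : r.IsEmptyRect)
    (hic : r.i < c) (hcj : c < r.j) (hc : r.perm c < r.perm r.i)
    (hfirst : ∀ k ∈ Ioo r.i c, r.perm r.j < r.perm k) :
    ∃ r₁ ∈ planarEmptyBelow G r.width, ∃ r₂ ∈ planarEmptyBelow G r.width,
      ∃ r₃ ∈ planarEmptyBelow G r.width, IsSquareOf r₁ r r₂ r₃ := by
  obtain ⟨x, i, j, hij⟩ := r
  obtain ⟨σ, rfl⟩ : ∃ σ, x = σ * swap i c := ⟨x * swap i c, by simp⟩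
  have hj : swap i c j = j := swap_apply_of_ne_of_ne hij.symm hcj.ne'
  refine exists_isSquareOf_mul_swap_left hG hic hcj (by simpa using hc)
    (by simpa [hj] using hp.2) hr.1 hr.2 (fun k hk hσk ↦ ?_) fun k hk ↦ ?_
  · have hk' : swap i c k = k := swap_apply_of_ne_of_ne hk.1.ne' hk.2.ne
    exact hσk.2.not_gt (by simpa [hj, hk'] using hfirst k hk)
  · have hk' : swap i c k = k := swap_apply_of_ne_of_ne (hic.trans hk.1).ne' hk.1.ne'
    simpa [hj, hk'] using isEmptyRect_iff_s4.1 he k ⟨hic.trans hk.1, hk.2⟩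

theorem decompose_wide_rectangle_general (hG : UncrossingClosed G)
    (hr : r.perm ∈ G ∧ r.endPerm ∈ G) (hp : r.Planar) (he : r.IsEmptyRect) (hw : 2 ≤ r.width) :
    ∃ r₁ ∈ planarEmptyBelow G r.width, ∃ r₂ ∈ planarEmptyBelow G r.width,
      ∃ r₃ ∈ planarEmptyBelow G r.width, IsSquareOf r₁ r r₂ r₃ := by
  let above : Set (Fin N) := {k ∈ Ioo r.i r.j | r.perm r.j < r.perm k}
  rcases above.eq_empty_or_nonempty with h_empty | h_nonempty
  · obtain ⟨c, hic, hcj⟩ := exists_covBy_lt_of_two_le_width hw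
    have hc : r.perm c < r.perm r.i := (he.lt_or_lt ⟨hic.lt, hcj⟩).resolve_right fun h ↦
      h_empty.subset ⟨⟨hic.lt, hcj⟩, h⟩
    exact exists_isSquareOf_of_first_below hG hr hp he hic.lt hcj hc fun k hk ↦
      absurd hk.2 (hic.2 hk.1)
  · obtain ⟨c, ⟨⟨hic, hcj⟩, hc⟩, hmax⟩ := above.toFinite.exists_maximal h_nonempty
    refine exists_isSquareOf_of_last_above hG hr hp he hic hcj hc fun k hk ↦ ?_
    have hkij : k ∈ Ioo r.i r.j := ⟨hic.trans hk.1, hk.2⟩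
    exact (he.lt_or_lt hkij).resolve_right fun h ↦ hk.1.not_ge (hmax ⟨hkij, h⟩ hk.1.le)

end Decomposition

/-- A planar empty rectangle in `F'` of width at least 2 can be written as part of a square
together with three planar empty rectangles in `F'` of strictly smaller width, either as the
first flow of the first pair or as the second flow of the first pair. -/
theorem decompose_wide_rectangle (m n : ℕ) (hm : 1 ≤ m) (hn : 1 ≤ n)
    (r : GridRect (m + n)) (hr : r ∈ FSet m n) (hp : r.Planar) (he : r.IsEmptyRect)
    (hw : 2 ≤ r.width) :
    ∃ r1 r2 r3 : GridRect (m + n),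
      (r1 ∈ FSet m n ∧ r1.Planar ∧ r1.IsEmptyRect ∧ r1.width < r.width) ∧
      (r2 ∈ FSet m n ∧ r2.Planar ∧ r2.IsEmptyRect ∧ r2.width < r.width) ∧
      (r3 ∈ FSet m n ∧ r3.Planar ∧ r3.IsEmptyRect ∧ r3.width < r.width) ∧
      (IsSquareOf r r1 r2 r3 ∨ IsSquareOf r1 r r2 r3) := by
  obtain ⟨r₁, h₁, r₂, h₂, r₃, h₃, h⟩ :=
    decompose_wide_rectangle_general (uncrossingClosed_genSet m n) hr hp he hw
  exact ⟨r₁, r₂, r₃, h₁, h₂, h₃, .inr h⟩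
end

section
/- Let m, n ≥ 1 and set N = m + n. For any two generators σ, σ' in Σ there is a finite sequence σ = σ_0, σ_1, ..., σ_k = σ' of generators, all lying in Σ, such that for each t with 0 ≤ t < k there is a column c_t with 1 ≤ c_t ≤ N − 1 and σ_{t+1} = σ_t·τ_{c_t}. (That is, the graph with vertex set Σ and edges given by planar thin rectangles is connected.) -/
/-- The column `c` as an element of `Fin N`, given `c + 1 < N`. -/
def colFin {N : ℕ} (c : ℕ) (hc : c + 1 < N) : Fin N := ⟨c, Nat.lt_of_succ_lt hc⟩

/-- The column `c + 1` as an element of `Fin N`, given `c + 1 < N`. -/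
def colFin' {N : ℕ} (c : ℕ) (hc : c + 1 < N) : Fin N := ⟨c + 1, hc⟩

/-- The generator `σ·τ_c = σ^{c,c+1}`. -/
def tmul {N : ℕ} (σ : Equiv.Perm (Fin N)) (c : ℕ) (hc : c + 1 < N) : Equiv.Perm (Fin N) :=
  (Equiv.swap (colFin c hc) (colFin' c hc)).trans σ

/-!
Bubble sort: the first `m` columns only bound the row from above and the remaining ones only from
below, so removing an adjacent descent, which moves the smaller value left and the larger one
right, never leaves `Σ`. Each removal lowers the generator lexicographically, so the process
stops, and it can only stop at the identity. Hence every generator in `Σ` is joined to the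
identity within `Σ`.
-/

theorem colFin_lt_colFin' {N : ℕ} (c : ℕ) (hc : c + 1 < N) : colFin c hc < colFin' c hc :=
  Nat.lt_succ_self c

section AdjacentSwap

variable {N : ℕ} (σ : Equiv.Perm (Fin N)) (c : ℕ) (hc : c + 1 < N)

theorem tmul_apply_left : tmul σ c hc (colFin c hc) = σ (colFin' c hc) := by
  simp only [tmul, Equiv.trans_apply, Equiv.swap_apply_left]

theorem tmul_apply_right : tmul σ c hc (colFin' c hc) = σ (colFin c hc) := by
  simp only [tmul, Equiv.trans_apply, Equiv.swap_apply_right]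

theorem tmul_apply_of_ne_of_ne {j : Fin N} (hleft : j ≠ colFin c hc)
    (hright : j ≠ colFin' c hc) : tmul σ c hc j = σ j := by
  simp only [tmul, Equiv.trans_apply, Equiv.swap_apply_of_ne_of_ne hleft hright]

theorem tmul_tmul : tmul (tmul σ c hc) c hc = σ := by
  simp only [tmul, ← Equiv.trans_assoc, Equiv.swap_swap, Equiv.refl_trans]

theorem tmul_ne_self : tmul σ c hc ≠ σ := fun h =>
  (colFin_lt_colFin' c hc).ne' (σ.injective ((tmul_apply_left σ c hc).symm.trans (by rw [h])))

end AdjacentSwap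

theorem toLex_tmul_lt {N : ℕ} {σ : Equiv.Perm (Fin N)} {c : ℕ} {hc : c + 1 < N}
    (hdesc : σ (colFin' c hc) < σ (colFin c hc)) :
    toLex (⇑(tmul σ c hc)) < toLex (⇑σ) :=
  Pi.lex_desc (colFin_lt_colFin' c hc).le hdesc

theorem exists_descent_of_ne_one {N : ℕ} {σ : Equiv.Perm (Fin N)} (hσ : σ ≠ 1) :
    ∃ (c : ℕ) (hc : c + 1 < N), σ (colFin' c hc) < σ (colFin c hc) := by
  contrapose! hσ
  cases N with
  | zero => exact Subsingleton.elim σ 1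
  | succ N =>
    exact σ.monotone_iff.mp (Fin.monotone_iff_le_succ.mpr fun i => hσ i (Nat.succ_lt_succ i.2))

/-- The graph on all generators of the toroidal grid of size `N` whose edges are the planar thin
rectangles, i.e. join `σ` to `σ·τ_c`; the graph on a set `S` of generators is its induced
subgraph. -/
def thinRectangleGraph (N : ℕ) : SimpleGraph (Equiv.Perm (Fin N)) where
  Adj σ ρ := ∃ (c : ℕ) (hc : c + 1 < N), ρ = tmul σ c hc
  symm := ⟨by
    rintro σ _ ⟨c, hc, rfl⟩
    exact ⟨c, hc, (tmul_tmul σ c hc).symm⟩⟩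
  loopless := ⟨fun σ ⟨c, hc, h⟩ => tmul_ne_self σ c hc h.symm⟩

/-- A set of generators is descent-closed if it is stable under the bubble sort steps `σ ↦ σ·τ_c`
at columns `c` where `σ(c + 1) < σ(c)`. -/
def DescentClosed {N : ℕ} (S : Set (Equiv.Perm (Fin N))) : Prop :=
  ∀ σ ∈ S, ∀ (c : ℕ) (hc : c + 1 < N), σ (colFin' c hc) < σ (colFin c hc) → tmul σ c hc ∈ S

theorem descentClosed_genSet (m n : ℕ) : DescentClosed (GenSet m n) := by
  intro σ hσ c hc hdesc j
  have hleft : (c < m → (σ (colFin c hc) : ℕ) ≤ m) ∧ (m ≤ c → m ≤ (σ (colFin c hc) : ℕ) + 1) :=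
    hσ (colFin c hc)
  have hright : (c + 1 < m → (σ (colFin' c hc) : ℕ) ≤ m) ∧
      (m ≤ c + 1 → m ≤ (σ (colFin' c hc) : ℕ) + 1) := hσ (colFin' c hc)
  rw [Fin.lt_def] at hdesc
  obtain rfl | hjl := eq_or_ne j (colFin c hc)
  · rw [tmul_apply_left]
    exact ⟨fun h => hdesc.le.trans (hleft.1 h), fun h => hright.2 (Nat.le_succ_of_le h)⟩
  obtain rfl | hjr := eq_or_ne j (colFin' c hc)
  · rw [tmul_apply_right]
    exact ⟨fun h => hleft.1 (Nat.lt_of_succ_lt h),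
      fun h => (hright.2 h).trans (Nat.succ_le_succ hdesc.le)⟩
  · rw [tmul_apply_of_ne_of_ne σ c hc hjl hjr]
    exact hσ j

namespace DescentClosed

variable {N : ℕ} {S : Set (Equiv.Perm (Fin N))}

theorem exists_reachable_one (hS : DescentClosed S) {σ : Equiv.Perm (Fin N)} (hσ : σ ∈ S) :
    ∃ hone : 1 ∈ S, ((thinRectangleGraph N).induce S).Reachable ⟨σ, hσ⟩ ⟨1, hone⟩ := by
  have hwf : WellFounded fun ρ σ : Equiv.Perm (Fin N) => toLex (⇑ρ) < toLex (⇑σ) :=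
    InvImage.wf _ wellFounded_lt
  induction σ using hwf.induction with
  | _ σ ih =>
    obtain rfl | hne := eq_or_ne σ 1
    · exact ⟨hσ, .rfl⟩
    obtain ⟨c, hc, hdesc⟩ := exists_descent_of_ne_one hne
    have hmem : tmul σ c hc ∈ S := hS σ hσ c hc hdesc
    obtain ⟨hone, hreach⟩ := ih _ (toLex_tmul_lt hdesc) hmem
    have hadj : ((thinRectangleGraph N).induce S).Adj ⟨σ, hσ⟩ ⟨tmul σ c hc, hmem⟩ := ⟨c, hc, rfl⟩
    exact ⟨hone, hadj.reachable.trans hreach⟩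

theorem preconnected_induce (hS : DescentClosed S) :
    ((thinRectangleGraph N).induce S).Preconnected := by
  rintro ⟨σ, hσ⟩ ⟨σ', hσ'⟩
  obtain ⟨_, hreach⟩ := hS.exists_reachable_one hσ
  obtain ⟨_, hreach'⟩ := hS.exists_reachable_one hσ'
  exact hreach.trans hreach'.symm

end DescentClosed

theorem genset_graph_connected_general {N : ℕ} {S : Set (Equiv.Perm (Fin N))}
    (hS : DescentClosed S) {σ σ' : Equiv.Perm (Fin N)} (hσ : σ ∈ S) (hσ' : σ' ∈ S) :
    ∃ (k : ℕ) (f : ℕ → Equiv.Perm (Fin N)),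
      f 0 = σ ∧ f k = σ' ∧ (∀ t ≤ k, f t ∈ S) ∧
      ∀ t < k, ∃ (c : ℕ) (hc : c + 1 < N), f (t + 1) = tmul (f t) c hc := by
  obtain ⟨p⟩ := hS.preconnected_induce ⟨σ, hσ⟩ ⟨σ', hσ'⟩
  exact ⟨p.length, fun t => p.getVert t, congrArg Subtype.val p.getVert_zero,
    congrArg Subtype.val p.getVert_length, fun t _ => (p.getVert t).2,
    fun _ ht => p.adj_getVert_succ ht⟩

/-- Any two generators in `Σ` are connected by a finite sequence of generators in `Σ`, each
obtained from the previous one by multiplication by an adjacent transposition `τ_c`; i.e. the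
graph on `Σ` with edges the planar thin rectangles is connected. -/
theorem genset_graph_connected (m n : ℕ) (hm : 1 ≤ m) (hn : 1 ≤ n)
    (σ σ' : Equiv.Perm (Fin (m + n))) (hσ : σ ∈ GenSet m n) (hσ' : σ' ∈ GenSet m n) :
    ∃ (k : ℕ) (f : ℕ → Equiv.Perm (Fin (m + n))),
      f 0 = σ ∧ f k = σ' ∧ (∀ t ≤ k, f t ∈ GenSet m n) ∧
      ∀ t < k, ∃ (c : ℕ) (hc : c + 1 < m + n), f (t + 1) = tmul (f t) c hc :=
  genset_graph_connected_general (descentClosed_genSet m n) hσ hσ'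
end
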